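/- Let 𝒜 be an AD-family on ℕ and let f : ℕ → ℕ be a surjection such that f⁻¹({n}) ∩ A is finite for every n ∈ ℕ and every A ∈ 𝒜 (i.e., f is finite-to-one on each member of 𝒜). Let 𝒟_f = {f[A] : A ∈ 𝒜}, where f[A] = {f(a) : a ∈ A}. Then f[F_𝒜] = F_{𝒟_f}; in particular F_{𝒟_f} ≤_RK F_𝒜 via the function f. -/

import Mathlib

open Set

/-- `f[G] = {A : f⁻¹(A) ∈ G}`, the image (Rudin–Keisler) filter of a family of sets. -/
def mapFilter {α β : Type*} (f : α → β) (G : Set (Set α)) : Set (Set β) := {A | f ⁻¹' A ∈ G}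

/-- `F` is a (proper) filter of subsets. -/
def IsFilterFam {α : Type*} (F : Set (Set α)) : Prop :=
  Set.univ ∈ F ∧ (∀ A ∈ F, ∀ B : Set α, A ⊆ B → B ∈ F) ∧ (∀ A ∈ F, ∀ B ∈ F, A ∩ B ∈ F)

/-- A free filter: a proper filter containing all cofinite sets. -/
def IsFreeFilter {α : Type*} (F : Set (Set α)) : Prop :=
  IsFilterFam F ∧ (∀ A : Set α, Aᶜ.Finite → A ∈ F) ∧ ∅ ∉ F

/-- `S → F` : `S` is an infinite set converging to the filter `F`, i.e. `S ⊆* A` for all `A ∈ F`. -/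
def ConvTo {α : Type*} (S : Set α) (F : Set (Set α)) : Prop :=
  S.Infinite ∧ ∀ A ∈ F, (S \ A).Finite

/-- `F` is relatively equivalent to the Fréchet filter: some `A ∈ F` converges to `F`. -/
def RelFrechet {α : Type*} (F : Set (Set α)) : Prop := ∃ A ∈ F, ConvTo A F

/-- Rudin–Keisler order: `F ≤_RK G` iff `f[G] = F` for some surjection `f`. -/
def RKle {α : Type*} (F G : Set (Set α)) : Prop :=
  ∃ f : α → α, Function.Surjective f ∧ mapFilter f G = F

/-- `F ≈ G` : there is a bijection `f` with `f[F] = G`. -/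
def EquivFilter {α : Type*} (F G : Set (Set α)) : Prop :=
  ∃ f : α → α, Function.Bijective f ∧ mapFilter f F = G

/-- `F <_RK G` : `F ≤_RK G` and `¬ (F ≈ G)`. -/
def RKlt {α : Type*} (F G : Set (Set α)) : Prop := RKle F G ∧ ¬ EquivFilter F G

/-- An AD-family: an infinite family of infinite sets with pairwise finite intersections. -/
def IsADFamily {α : Type*} (𝒜 : Set (Set α)) : Prop :=
  𝒜.Infinite ∧ (∀ A ∈ 𝒜, A.Infinite) ∧ ∀ A ∈ 𝒜, ∀ B ∈ 𝒜, A ≠ B → (A ∩ B).Finite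

/-- The ideal generated by a family `𝒜`: sets almost covered by finitely many members of `𝒜`. -/
def idealGen {α : Type*} (𝒜 : Set (Set α)) : Set (Set α) :=
  {X | ∃ 𝒜' : Finset (Set α), ↑𝒜' ⊆ 𝒜 ∧ (X \ ⋃₀ ↑𝒜').Finite}

/-- `S_𝒜`: the filter dual to the ideal generated by `𝒜`. -/
def SFam {α : Type*} (𝒜 : Set (Set α)) : Set (Set α) := {F | Fᶜ ∈ idealGen 𝒜}

/-- `F_𝒟 = {F : D ⊆* F for every D ∈ 𝒟}`. -/
def FFam {α : Type*} (𝒟 : Set (Set α)) : Set (Set α) := {F | ∀ D ∈ 𝒟, (D \ F).Finite}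

/-- A nowhere MAD family: every set outside the generated ideal contains an infinite set
almost disjoint from every member of `𝒜`. -/
def IsNMAD {α : Type*} (𝒜 : Set (Set α)) : Prop :=
  IsADFamily 𝒜 ∧ ∀ X : Set α, X ∉ idealGen 𝒜 →
    ∃ B ⊆ X, B.Infinite ∧ ∀ A ∈ 𝒜, (B ∩ A).Finite

/-- A partition of `ℕ` into infinitely many infinite sets. -/
def IsInfPartition (𝒬 : Set (Set ℕ)) : Prop :=
  𝒬.Infinite ∧ (∀ P ∈ 𝒬, P.Infinite) ∧ ⋃₀ 𝒬 = Set.univ ∧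
    ∀ P ∈ 𝒬, ∀ Q ∈ 𝒬, P ≠ Q → P ∩ Q = ∅

/-- `F` is a Fréchet–Urysohn filter: every `F`-positive set contains a sequence converging to `F`. -/
def IsFUFilter {α : Type*} (F : Set (Set α)) : Prop :=
  ∀ A : Set α, Aᶜ ∉ F → ∃ S ⊆ A, ConvTo S F

/-- The trace filter `F|_A = {G ∩ A : G ∈ F}`. -/
def traceFam {α : Type*} (F : Set (Set α)) (A : Set α) : Set (Set α) := {S | ∃ G ∈ F, S = G ∩ A}

/-- Todorčević–Uzcátegui order: there are `A ∈ G⁺`, `B ∈ F` and a bijection `f : A → B`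
with `f[G|_A] = F|_B`. -/
def TUle {α : Type*} (F G : Set (Set α)) : Prop :=
  ∃ A : Set α, Aᶜ ∉ G ∧ ∃ B ∈ F, ∃ f : α → α, Set.BijOn f A B ∧
    {Y : Set α | Y ⊆ B ∧ A ∩ f ⁻¹' Y ∈ traceFam G A} = traceFam F B

theorem finite_image_iff_of_finite_fibers {α β : Type*} {f : α → β} {S : Set α}
    (hfin : ∀ b, (f ⁻¹' {b} ∩ S).Finite) : (f '' S).Finite ↔ S.Finite :=
  ⟨fun h => h.of_finite_fibers f fun b _ => inter_comm S _ ▸ hfin b, fun h => h.image f⟩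

theorem mapFilter_FFam {α β : Type*} {𝒜 : Set (Set α)} {f : α → β}
    (hfin : ∀ b, ∀ A ∈ 𝒜, (f ⁻¹' {b} ∩ A).Finite) :
    mapFilter f (FFam 𝒜) = FFam ((fun A => f '' A) '' 𝒜) := by
  ext B
  have finite_diff_iff : ∀ A ∈ 𝒜, (A \ f ⁻¹' B).Finite ↔ (f '' A \ B).Finite := by
    intro A hA
    have hfibers : ∀ b, (f ⁻¹' {b} ∩ (A \ f ⁻¹' B)).Finite := fun b =>
      (hfin b A hA).subset (inter_subset_inter_right _ sdiff_subset)
    rw [← image_sdiff_preimage, finite_image_iff_of_finite_fibers hfibers]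
  calc B ∈ mapFilter f (FFam 𝒜)
    _ ↔ ∀ A ∈ 𝒜, (A \ f ⁻¹' B).Finite := Iff.rfl
    _ ↔ ∀ A ∈ 𝒜, (f '' A \ B).Finite := forall₂_congr finite_diff_iff
    _ ↔ B ∈ FFam ((fun A => f '' A) '' 𝒜) :=
      (forall_mem_image (p := fun D => (D \ B).Finite)).symm

theorem statement3_general {α : Type*} {𝒜 : Set (Set α)} {f : α → α}
    (hf : Function.Surjective f) (hfin : ∀ a, ∀ A ∈ 𝒜, (f ⁻¹' {a} ∩ A).Finite) :
    mapFilter f (FFam 𝒜) = FFam ((fun A => f '' A) '' 𝒜) ∧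
      RKle (FFam ((fun A => f '' A) '' 𝒜)) (FFam 𝒜) :=
  ⟨mapFilter_FFam hfin, f, hf, mapFilter_FFam hfin⟩

/-- If `f` is a surjection finite-to-one on each member of the AD-family `𝒜`, then
`f[F_𝒜] = F_{𝒟_f}` where `𝒟_f = {f[A] : A ∈ 𝒜}`; in particular `F_{𝒟_f} ≤_RK F_𝒜` via `f`. -/
theorem statement3 (𝒜 : Set (Set ℕ)) (h𝒜 : IsADFamily 𝒜) (f : ℕ → ℕ)
    (hf : Function.Surjective f)
    (hfin : ∀ n : ℕ, ∀ A ∈ 𝒜, (f ⁻¹' {n} ∩ A).Finite) :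
    mapFilter f (FFam 𝒜) = FFam ((fun A => f '' A) '' 𝒜) ∧
      RKle (FFam ((fun A => f '' A) '' 𝒜)) (FFam 𝒜) :=
  statement3_general hf hfin
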